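/- Fix k with 1 ≤ k ≤ K−1 and (w,b) ∈ (0,T)×[0,R̄], and assume T − w − η(b − φ_ℓ(w,b)) > 0 for every ℓ ∈ {1,…,K−k}. For ℓ ∈ {1,…,K−k} let δ_ℓ = (T−w)/(T − w − η(b − φ_ℓ(w,b))), let a_k^ℓ ∈ ℝ^{K−k+1} be the vector whose component at index k equals 1 − δ_ℓ, whose component at index k+ℓ equals δ_ℓ, and whose other components are zero, and let p_k^{(k)} ∈ P_k be the point mass at k. Then P_k ∩ conv{ p_k^{(k)}, a_k^1, …, a_k^{K−k} } ⊆ C_k(w,b), where conv denotes the convex hull. (Inner bound on the optimum stopping set.) -/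

import Mathlib

/-!
The continuing cost is bounded below by the cost of a decision maker who is told the true number
`n` of arrivals.  Write `ℓ = n - k` for the number of remaining arrivals.  For `ℓ ≥ 1`, such an
informed decision maker pays at least `-η φ_ℓ(w,b)` by continuing, and at least
`-η max(b, φ_ℓ(w,b))` in total.
Averaging over the belief `p` gives the two bounds

* `J_k(p,w,b) ≥ Σ_n p(n) (-η max(b, φ_{n-k}(w,b)))` (`value_bounds`),
* `c_k(p,w,b) ≥ p(k) (T - w - η b) - η Σ_{n>k} p(n) φ_{n-k}(w,b)` (`contCost_lower`),

proved together by backward induction.  In the step, the Bayes rule makes the normalising denominator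
of the belief transition cancel against the mixture density of the next arrival time
(`bayes_pointwise`), so that the integrand of the recursion for `c_k` dominates the integrand of the
recursion for `φ`.

The second bound is affine in `p`.  Adding `η b Σ_n p(n)`, it becomes a linear functional equal to
`T - w > 0` at the corner `p_k^{(k)}` and to `0` at each `a_k^ℓ`, by the choice of `δ_ℓ`; hence
it is nonnegative on their convex hull, which is the theorem.

Integrals are Bochner integrals, so the monotonicity arguments require integrability, which follows
from joint measurability of `φ_ℓ` and `J_k` together with the bounds `φ_ℓ ≤ R̄` and
`-η R̄ ≤ J_k ≤ 0`.
-/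

open MeasureTheory Set

/-- Density of the minimum of `m` iid Uniform[0,s] random variables. -/
noncomputable def gmin (m : ℕ) (s u : ℝ) : ℝ :=
  if 0 ≤ u ∧ u ≤ s then (m : ℝ) * (s - u) ^ (m - 1) / s ^ m else 0

/-- Threshold functions `φ_ℓ` defined recursively. -/
noncomputable def phi (T Rbar η : ℝ) (fR : ℝ → ℝ) : ℕ → ℝ → ℝ → ℝ
  | 0 => fun _ _ => 0
  | ℓ + 1 => fun w b =>
      ∫ r in (0:ℝ)..Rbar, ∫ u in (0:ℝ)..(T - w),
        (max b (max r (phi T Rbar η fR ℓ (w + u) (max b r))) - u / η)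
          * gmin (ℓ + 1) (T - w) u * fR r

/-- Membership in the probability simplex `P_k` (probability vectors on `{k,…,K}`). -/
def memP (K k : ℕ) (p : ℕ → ℝ) : Prop :=
  (∀ n, 0 ≤ p n) ∧ (∀ n, n < k ∨ K < n → p n = 0) ∧ ∑ n ∈ Finset.Icc k K, p n = 1

/-- Belief state transition `τ_{k+1}(p,w,u)`. -/
noncomputable def τbel (T : ℝ) (K k : ℕ) (p : ℕ → ℝ) (w u : ℝ) : ℕ → ℝ :=
  fun n => p n * gmin (n - k) (T - w) u /
    ∑ ℓ ∈ Finset.Icc (k + 1) K, p ℓ * gmin (ℓ - k) (T - w) u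

/-- Continuing cost at stage `k`, given the value function `Jnext` of stage `k+1`. -/
noncomputable def contCost (T Rbar η : ℝ) (fR : ℝ → ℝ) (K : ℕ)
    (Jnext : (ℕ → ℝ) → ℝ → ℝ → ℝ) (k : ℕ) (p : ℕ → ℝ) (w b : ℝ) : ℝ :=
  p k * (T - w - η * b) +
    ∑ n ∈ Finset.Icc (k + 1) K, p n *
      ∫ r in (0:ℝ)..Rbar, ∫ u in (0:ℝ)..(T - w),
        (u + Jnext (τbel T K k p w u) (w + u) (max b r)) * gmin (n - k) (T - w) u * fR r

/-- Backward value recursion: `Jaux m` is the value function at stage `K - m`. -/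
noncomputable def Jaux (T Rbar η : ℝ) (fR : ℝ → ℝ) (K : ℕ) : ℕ → (ℕ → ℝ) → ℝ → ℝ → ℝ
  | 0 => fun _ _ b => -η * b
  | m + 1 => fun p w b =>
      min (-η * b)
        (contCost T Rbar η fR K (Jaux T Rbar η fR K m) (K - (m + 1)) p w b)

/-- The optimal cost-to-go function `J_k`. -/
noncomputable def Jval (T Rbar η : ℝ) (fR : ℝ → ℝ) (K k : ℕ) : (ℕ → ℝ) → ℝ → ℝ → ℝ :=
  Jaux T Rbar η fR K (K - k)

/-- The continuing cost `c_k`. -/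
noncomputable def cCost (T Rbar η : ℝ) (fR : ℝ → ℝ) (K k : ℕ) : (ℕ → ℝ) → ℝ → ℝ → ℝ :=
  contCost T Rbar η fR K (Jaux T Rbar η fR K (K - (k + 1))) k

/-! ### Measurability -/

lemma measurable_gmin (m : ℕ) : Measurable (fun x : ℝ × ℝ => gmin m x.1 x.2) := by
  unfold gmin
  refine Measurable.ite ?_ (by fun_prop) measurable_const
  exact (measurableSet_le measurable_const measurable_snd).inter
    (measurableSet_le measurable_snd measurable_fst)

lemma measurable_interval {X : Type*} [MeasurableSpace X] {F : X → ℝ → ℝ}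
    (hF : Measurable (fun z : X × ℝ => F z.1 z.2)) {c : X → ℝ} (hc : Measurable c) :
    Measurable (fun x => ∫ u in (0:ℝ)..(c x), F x u) := by
  have key : ∀ S : Set (X × ℝ), MeasurableSet S →
      Measurable (fun x => ∫ u, S.indicator (fun z : X × ℝ => F z.1 z.2) (x, u)) := by
    intro S hS
    exact ((hF.indicator hS).stronglyMeasurable.integral_prod_right').measurable
  have hc' : Measurable (fun z : X × ℝ => c z.1) := hc.comp measurable_fst
  have h1 := key {z | 0 < z.2 ∧ z.2 ≤ c z.1}
    ((measurableSet_lt measurable_const measurable_snd).inter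
      (measurableSet_le measurable_snd hc'))
  have h2 := key {z | c z.1 < z.2 ∧ z.2 ≤ 0}
    ((measurableSet_lt hc' measurable_snd).inter
      (measurableSet_le measurable_snd measurable_const))
  convert h1.sub h2 using 1
  funext x
  simp only [Pi.sub_apply]
  rw [intervalIntegral, ← integral_indicator measurableSet_Ioc,
    ← integral_indicator measurableSet_Ioc]
  rfl

lemma measurable_phi (T Rbar η : ℝ) (fR : ℝ → ℝ) (hf : Measurable fR) (ℓ : ℕ) :
    Measurable (fun x : ℝ × ℝ => phi T Rbar η fR ℓ x.1 x.2) := by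
  induction ℓ with
  | zero => exact measurable_const
  | succ ℓ ih =>
    simp only [phi]
    refine measurable_interval (X := ℝ × ℝ) (F := fun x r => ∫ u in (0:ℝ)..(T - x.1),
        (max x.2 (max r (phi T Rbar η fR ℓ (x.1 + u) (max x.2 r))) - u / η)
          * gmin (ℓ + 1) (T - x.1) u * fR r) ?_ measurable_const
    refine measurable_interval (X := (ℝ × ℝ) × ℝ) (F := fun x u =>
        (max x.1.2 (max x.2 (phi T Rbar η fR ℓ (x.1.1 + u) (max x.1.2 x.2))) - u / η)
          * gmin (ℓ + 1) (T - x.1.1) u * fR x.2) ?_ (by fun_prop)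
    have h1 : Measurable (fun z : ((ℝ × ℝ) × ℝ) × ℝ =>
        phi T Rbar η fR ℓ (z.1.1.1 + z.2) (max z.1.1.2 z.1.2)) :=
      ih.comp (f := fun z : ((ℝ × ℝ) × ℝ) × ℝ => (z.1.1.1 + z.2, max z.1.1.2 z.1.2)) (by fun_prop)
    have h2 : Measurable (fun z : ((ℝ × ℝ) × ℝ) × ℝ => gmin (ℓ + 1) (T - z.1.1.1) z.2) :=
      (measurable_gmin (ℓ + 1)).comp
        (f := fun z : ((ℝ × ℝ) × ℝ) × ℝ => (T - z.1.1.1, z.2)) (by fun_prop)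
    fun_prop

lemma measurable_τbel (T : ℝ) (K k : ℕ) :
    Measurable (fun x : (ℕ → ℝ) × ℝ × ℝ => τbel T K k x.1 x.2.1 x.2.2) := by
  have h : ∀ m, Measurable (fun x : (ℕ → ℝ) × ℝ × ℝ => gmin m (T - x.2.1) x.2.2) := fun m =>
    (measurable_gmin m).comp
      (f := fun x : (ℕ → ℝ) × ℝ × ℝ => (T - x.2.1, x.2.2)) (by fun_prop)
  have hp : ∀ n, Measurable (fun x : (ℕ → ℝ) × ℝ × ℝ => x.1 n) := fun n =>
    (measurable_pi_apply n).comp measurable_fst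
  refine measurable_pi_lambda _ fun n => ?_
  unfold τbel
  exact ((hp n).mul (h _)).div (Finset.measurable_sum _ fun ℓ _ => (hp ℓ).mul (h _))

lemma measurable_contCost (T Rbar η : ℝ) (fR : ℝ → ℝ) (hf : Measurable fR) (K k : ℕ)
    (J : (ℕ → ℝ) → ℝ → ℝ → ℝ)
    (hJ : Measurable (fun x : (ℕ → ℝ) × ℝ × ℝ => J x.1 x.2.1 x.2.2)) :
    Measurable (fun x : (ℕ → ℝ) × ℝ × ℝ => contCost T Rbar η fR K J k x.1 x.2.1 x.2.2) := by
  have hp : ∀ n, Measurable (fun x : (ℕ → ℝ) × ℝ × ℝ => x.1 n) := fun n =>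
    (measurable_pi_apply n).comp measurable_fst
  unfold contCost
  refine Measurable.add ((hp k).mul (by fun_prop)) (Finset.measurable_sum _ fun n _ =>
    (hp n).mul ?_)
  refine measurable_interval (X := (ℕ → ℝ) × ℝ × ℝ) (F := fun x r => ∫ u in (0:ℝ)..(T - x.2.1),
        (u + J (τbel T K k x.1 x.2.1 u) (x.2.1 + u) (max x.2.2 r))
          * gmin (n - k) (T - x.2.1) u * fR r) ?_ measurable_const
  refine measurable_interval (X := ((ℕ → ℝ) × ℝ × ℝ) × ℝ) (F := fun x u =>
        (u + J (τbel T K k x.1.1 x.1.2.1 u) (x.1.2.1 + u) (max x.1.2.2 x.2))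
          * gmin (n - k) (T - x.1.2.1) u * fR x.2) ?_ (by fun_prop)
  have h1 : Measurable (fun z : (((ℕ → ℝ) × ℝ × ℝ) × ℝ) × ℝ =>
      τbel T K k z.1.1.1 z.1.1.2.1 z.2) :=
    (measurable_τbel T K k).comp
      (f := fun z : (((ℕ → ℝ) × ℝ × ℝ) × ℝ) × ℝ => (z.1.1.1, z.1.1.2.1, z.2)) (by fun_prop)
  have h2 : Measurable (fun z : (((ℕ → ℝ) × ℝ × ℝ) × ℝ) × ℝ =>
      J (τbel T K k z.1.1.1 z.1.1.2.1 z.2) (z.1.1.2.1 + z.2) (max z.1.1.2.2 z.1.2)) :=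
    hJ.comp (f := fun z : (((ℕ → ℝ) × ℝ × ℝ) × ℝ) × ℝ =>
      (τbel T K k z.1.1.1 z.1.1.2.1 z.2, z.1.1.2.1 + z.2, max z.1.1.2.2 z.1.2))
      (h1.prodMk (by fun_prop))
  have h3 : Measurable (fun z : (((ℕ → ℝ) × ℝ × ℝ) × ℝ) × ℝ =>
      gmin (n - k) (T - z.1.1.2.1) z.2) :=
    (measurable_gmin (n - k)).comp
      (f := fun z : (((ℕ → ℝ) × ℝ × ℝ) × ℝ) × ℝ => (T - z.1.1.2.1, z.2)) (by fun_prop)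
  fun_prop

lemma measurable_Jaux (T Rbar η : ℝ) (fR : ℝ → ℝ) (hf : Measurable fR) (K m : ℕ) :
    Measurable (fun x : (ℕ → ℝ) × ℝ × ℝ => Jaux T Rbar η fR K m x.1 x.2.1 x.2.2) := by
  induction m with
  | zero => simp only [Jaux]; fun_prop
  | succ m ih =>
    simp only [Jaux]
    exact Measurable.min (by fun_prop) (measurable_contCost T Rbar η fR hf K _ _ ih)

/-! ### The arrival density and double integrals -/

lemma gmin_nonneg (m : ℕ) (s u : ℝ) : 0 ≤ gmin m s u := by
  unfold gmin
  split_ifs with h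
  · have : 0 ≤ s - u := by linarith [h.2]
    have : 0 ≤ s := by linarith [h.1, h.2]
    positivity
  · exact le_rfl

lemma gmin_zero (s u : ℝ) : gmin 0 s u = 0 := by
  simp [gmin]

lemma integrableOn_gmin (m : ℕ) (s : ℝ) :
    IntegrableOn (gmin m s) (Ioc 0 s) := by
  have h : IntegrableOn (fun u : ℝ => (m : ℝ) * (s - u) ^ (m - 1) / s ^ m) (Ioc 0 s) :=
    (Continuous.integrableOn_Icc (by fun_prop)).mono_set Ioc_subset_Icc_self
  refine h.congr_fun (fun u hu => ?_) measurableSet_Ioc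
  simp [gmin, hu.1.le, hu.2]

/-- The bound is `≤ 1` instead of `= 1` so that the degenerate case `s = 0`, where the integral
vanishes, is included. -/
lemma integral_gmin_le (m : ℕ) {s : ℝ} (hs : 0 ≤ s) :
    ∫ u in Ioc 0 s, gmin (m + 1) s u ≤ 1 := by
  have h : ∫ u in Ioc 0 s, gmin (m + 1) s u
      = ∫ u in (0:ℝ)..s, ((m + 1 : ℕ) : ℝ) / s ^ (m + 1) * (s - u) ^ m := by
    rw [intervalIntegral.integral_of_le hs]
    refine setIntegral_congr_fun measurableSet_Ioc (fun u hu => ?_)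
    simp [gmin, hu.1.le, hu.2]
    ring
  rw [h, intervalIntegral.integral_const_mul,
    intervalIntegral.integral_comp_sub_left (fun x => x ^ m), integral_pow]
  rcases hs.eq_or_lt with h0 | h0
  · subst h0; simp
  · push_cast
    have : s ^ (m + 1) ≠ 0 := by positivity
    have : (m : ℝ) + 1 ≠ 0 := by positivity
    simp
    field_simp
    exact le_rfl

/-- Lebesgue measure on `(0,R̄] × (0,s]`, the domain of the reward and the next arrival time. -/
noncomputable def boxMeasure (Rbar s : ℝ) : Measure (ℝ × ℝ) :=
  (volume.restrict (Ioc 0 Rbar)).prod (volume.restrict (Ioc 0 s))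

lemma ae_boxMeasure {Rbar s : ℝ} {P : ℝ × ℝ → Prop}
    (h : ∀ r ∈ Ioc 0 Rbar, ∀ u ∈ Ioc 0 s, P (r, u)) : ∀ᵐ z ∂(boxMeasure Rbar s), P z := by
  rw [boxMeasure, Measure.prod_restrict]
  exact ae_restrict_of_forall_mem (measurableSet_Ioc.prod measurableSet_Ioc)
    (fun z hz => h z.1 hz.1 z.2 hz.2)

lemma interval_eq_box {Rbar s : ℝ} (hR : 0 ≤ Rbar) (hs : 0 ≤ s) {F : ℝ → ℝ → ℝ}
    (hF : Integrable (fun z : ℝ × ℝ => F z.1 z.2) (boxMeasure Rbar s)) :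
    ∫ r in (0:ℝ)..Rbar, ∫ u in (0:ℝ)..s, F r u = ∫ z, F z.1 z.2 ∂(boxMeasure Rbar s) := by
  rw [intervalIntegral.integral_of_le hR, boxMeasure]
  rw [boxMeasure] at hF
  rw [integral_prod _ hF]
  refine integral_congr_ae (Filter.Eventually.of_forall fun r => ?_)
  exact intervalIntegral.integral_of_le hs

lemma integrable_density {Rbar : ℝ} (s : ℝ) {fR : ℝ → ℝ}
    (hfi : IntegrableOn fR (Ioc 0 Rbar)) (m : ℕ) :
    Integrable (fun z : ℝ × ℝ => gmin m s z.2 * fR z.1) (boxMeasure Rbar s) := by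
  have := hfi.mul_prod (integrableOn_gmin m s)
  simpa [boxMeasure, mul_comm] using this

/-- The bound on `F` is only required where the weight `c * gmin m s u` is nonzero: posterior beliefs
are meaningless at arrival times of density zero. -/
lemma integrable_weighted {Rbar s : ℝ} {fR : ℝ → ℝ} (hf : Measurable fR)
    (hfi : IntegrableOn fR (Ioc 0 Rbar)) (m : ℕ) (c C : ℝ) {F : ℝ → ℝ → ℝ}
    (hF : Measurable (fun z : ℝ × ℝ => F z.1 z.2))
    (hb : ∀ r ∈ Ioc 0 Rbar, ∀ u ∈ Ioc 0 s, c * gmin m s u ≠ 0 → |F r u| ≤ C) :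
    Integrable (fun z : ℝ × ℝ => c * (F z.1 z.2 * gmin m s z.2 * fR z.1)) (boxMeasure Rbar s) := by
  have hg : Measurable (fun z : ℝ × ℝ => gmin m s z.2) :=
    (measurable_gmin m).comp (f := fun z : ℝ × ℝ => (s, z.2)) (by fun_prop)
  refine Integrable.mono' (((integrable_density _ hfi m).norm).const_mul (|c| * C)) ?_ ?_
  · exact (by fun_prop : Measurable _).aestronglyMeasurable
  · refine ae_boxMeasure fun r hr u hu => ?_
    by_cases h0 : c * gmin m s u = 0
    · have : c * (F r u * gmin m s u * fR r) = 0 := by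
        linear_combination (F r u * fR r) * h0
      simp only [this, norm_zero]
      rcases mul_eq_zero.1 h0 with h | h <;> simp [h]
    · have h1 := hb r hr u hu h0
      simp only [Real.norm_eq_abs, abs_mul]
      have : 0 ≤ |c| * (|gmin m s u| * |fR r|) := by positivity
      nlinarith [mul_le_mul_of_nonneg_right h1 this]

/-! ### Threshold functions -/

section Bounds

variable {T Rbar η : ℝ} {fR : ℝ → ℝ}

lemma phi_integrand_bound (hη : 0 < η) {s b r u x : ℝ} (hb : b ∈ Icc 0 Rbar)
    (hr : r ∈ Ioc 0 Rbar) (hu : u ∈ Ioc 0 s) (hx : x ≤ Rbar) :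
    |max b (max r x) - u / η| ≤ Rbar + s / η := by
  have h1 : 0 ≤ max b (max r x) := le_max_of_le_left hb.1
  have h2 : max b (max r x) ≤ Rbar := max_le hb.2 (max_le hr.2 hx)
  have h3 : 0 ≤ u / η := div_nonneg hu.1.le hη.le
  have h4 : u / η ≤ s / η := by gcongr; exact hu.2
  rw [abs_le]; constructor <;> linarith

lemma integrable_phi (hη : 0 < η) (hf : Measurable fR) (hfi : IntegrableOn fR (Ioc 0 Rbar))
    (ℓ : ℕ) {w b : ℝ} (hb : b ∈ Icc 0 Rbar)
    (hφ : ∀ w' ≤ T, ∀ b' ∈ Icc 0 Rbar, phi T Rbar η fR ℓ w' b' ≤ Rbar) :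
    Integrable (fun z : ℝ × ℝ =>
      (max b (max z.1 (phi T Rbar η fR ℓ (w + z.2) (max b z.1))) - z.2 / η)
          * gmin (ℓ + 1) (T - w) z.2 * fR z.1) (boxMeasure Rbar (T - w)) := by
  have hm : Measurable (fun z : ℝ × ℝ => phi T Rbar η fR ℓ (w + z.2) (max b z.1)) :=
    (measurable_phi T Rbar η fR hf ℓ).comp
      (f := fun z : ℝ × ℝ => (w + z.2, max b z.1)) (by fun_prop)
  have := integrable_weighted (Rbar := Rbar) (s := T - w) hf hfi (ℓ + 1) 1
    (Rbar + (T - w) / η)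
    (F := fun r u => max b (max r (phi T Rbar η fR ℓ (w + u) (max b r))) - u / η)
    (by fun_prop) (fun r hr u hu _ => phi_integrand_bound hη hb hr hu
      (hφ _ (by linarith [hu.2]) _ ⟨le_max_of_le_left hb.1, max_le hb.2 hr.2⟩))
  simpa using this

lemma phi_le (hη : 0 < η) (hRbar : 0 < Rbar) (hf0 : ∀ r, 0 ≤ fR r) (hf : Measurable fR)
    (hfi : IntegrableOn fR (Ioc 0 Rbar)) (hf1 : ∫ r in (0:ℝ)..Rbar, fR r = 1) (ℓ : ℕ) :
    ∀ w ≤ T, ∀ b ∈ Icc 0 Rbar, phi T Rbar η fR ℓ w b ≤ Rbar := by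
  induction ℓ with
  | zero => intro w _ b _; exact hRbar.le
  | succ ℓ ih =>
    intro w hw b hb
    have hs : 0 ≤ T - w := by linarith
    have hi := integrable_phi (w := w) hη hf hfi ℓ hb ih
    simp only [phi]
    rw [interval_eq_box hRbar.le hs (F := fun r u =>
      (max b (max r (phi T Rbar η fR ℓ (w + u) (max b r))) - u / η)
          * gmin (ℓ + 1) (T - w) u * fR r) hi]
    calc _ ≤ ∫ z, Rbar * (gmin (ℓ + 1) (T - w) z.2 * fR z.1) ∂(boxMeasure Rbar (T - w)) := by
          refine integral_mono_ae hi ((integrable_density _ hfi _).const_mul _) ?_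
          refine ae_boxMeasure fun r hr u hu => ?_
          have h2 := ih (w + u) (by linarith [hu.2]) (max b r)
            ⟨le_max_of_le_left hb.1, max_le hb.2 hr.2⟩
          have h3 : max b (max r (phi T Rbar η fR ℓ (w + u) (max b r))) ≤ Rbar :=
            max_le hb.2 (max_le hr.2 h2)
          have h4 : 0 ≤ u / η := div_nonneg hu.1.le hη.le
          have h5 := mul_nonneg (gmin_nonneg (ℓ + 1) (T - w) u) (hf0 r)
          dsimp only
          rw [mul_assoc]
          exact mul_le_mul_of_nonneg_right (by linarith) h5
      _ = Rbar * ∫ u in Ioc 0 (T - w), gmin (ℓ + 1) (T - w) u := by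
          rw [integral_const_mul]
          have : ∫ z, gmin (ℓ + 1) (T - w) z.2 * fR z.1 ∂(boxMeasure Rbar (T - w))
              = (∫ r in Ioc 0 Rbar, fR r) * ∫ u in Ioc 0 (T - w), gmin (ℓ + 1) (T - w) u := by
            rw [← integral_prod_mul, boxMeasure]
            simp only [mul_comm]
          rw [this, ← intervalIntegral.integral_of_le hRbar.le, hf1, one_mul]
      _ ≤ Rbar := by
          have := integral_gmin_le ℓ hs
          nlinarith

/-! ### Posterior beliefs -/

lemma denom_pos {K k n : ℕ} {p : ℕ → ℝ} (hp : memP K k p) {w u : ℝ}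
    (hn : n ∈ Finset.Icc (k + 1) K) (h : p n * gmin (n - k) (T - w) u ≠ 0) :
    0 < ∑ ℓ ∈ Finset.Icc (k + 1) K, p ℓ * gmin (ℓ - k) (T - w) u := by
  have h0 : ∀ ℓ, 0 ≤ p ℓ * gmin (ℓ - k) (T - w) u := fun ℓ =>
    mul_nonneg (hp.1 ℓ) (gmin_nonneg _ _ _)
  exact Finset.sum_pos' (fun ℓ _ => h0 ℓ) ⟨n, hn, (h0 n).lt_of_ne' h⟩

lemma memP_τbel {K k : ℕ} {p : ℕ → ℝ} (hp : memP K k p) {w u : ℝ}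
    (hD : 0 < ∑ ℓ ∈ Finset.Icc (k + 1) K, p ℓ * gmin (ℓ - k) (T - w) u) :
    memP K (k + 1) (τbel T K k p w u) := by
  refine ⟨fun n => ?_, fun n hn => ?_, ?_⟩
  · exact div_nonneg (mul_nonneg (hp.1 n) (gmin_nonneg _ _ _)) hD.le
  · unfold τbel
    rcases hn with hn | hn
    · -- for `n ≤ k` the truncated index `n - k` is `0`, and `gmin 0` vanishes
      have : n - k = 0 := by omega
      simp [this, gmin_zero]
    · simp [hp.2.1 n (Or.inr hn)]
  · unfold τbel
    rw [← Finset.sum_div, div_self hD.ne']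

/-- If, wherever the mixture density is positive, a next-stage cost `j` is at least the posterior
average of the costs `v n`, then `u + j` weighted by the mixture density is at least the prior average
of the `u + v n` weighted by the individual densities. -/
lemma bayes_pointwise {K k : ℕ} {p : ℕ → ℝ} (hp : memP K k p) {w u f j : ℝ} (hf : 0 ≤ f)
    (v : ℕ → ℝ)
    (hj : 0 < ∑ ℓ ∈ Finset.Icc (k + 1) K, p ℓ * gmin (ℓ - k) (T - w) u →
      ∑ n ∈ Finset.Icc (k + 1) K, τbel T K k p w u n * v n ≤ j) :
    ∑ n ∈ Finset.Icc (k + 1) K, p n * ((u + v n) * gmin (n - k) (T - w) u * f)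
      ≤ ∑ n ∈ Finset.Icc (k + 1) K, p n * ((u + j) * gmin (n - k) (T - w) u * f) := by
  set D := ∑ ℓ ∈ Finset.Icc (k + 1) K, p ℓ * gmin (ℓ - k) (T - w) u with hDdef
  by_cases hD : 0 < D
  · have h1 : ∑ n ∈ Finset.Icc (k + 1) K, p n * gmin (n - k) (T - w) u * v n
        = D * ∑ n ∈ Finset.Icc (k + 1) K, τbel T K k p w u n * v n := by
      rw [Finset.mul_sum]
      refine Finset.sum_congr rfl fun n _ => ?_
      unfold τbel
      rw [← hDdef]
      field_simp
    have h2 : ∑ n ∈ Finset.Icc (k + 1) K, p n * ((u + v n) * gmin (n - k) (T - w) u * f)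
        = f * (D * u + ∑ n ∈ Finset.Icc (k + 1) K, p n * gmin (n - k) (T - w) u * v n) := by
      rw [hDdef, Finset.sum_mul, ← Finset.sum_add_distrib, Finset.mul_sum]
      exact Finset.sum_congr rfl fun n _ => by ring
    have h3 : ∑ n ∈ Finset.Icc (k + 1) K, p n * ((u + j) * gmin (n - k) (T - w) u * f)
        = f * (D * u + D * j) := by
      rw [hDdef, Finset.sum_mul, Finset.sum_mul, ← Finset.sum_add_distrib, Finset.mul_sum]
      exact Finset.sum_congr rfl fun n _ => by ring
    rw [h2, h3, h1]
    have := mul_le_mul_of_nonneg_left (hj hD) hD.le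
    gcongr
  · refine Finset.sum_le_sum fun n hn => le_of_eq ?_
    have h0 : p n * gmin (n - k) (T - w) u = 0 := by
      by_contra h
      exact hD (denom_pos hp hn h)
    linear_combination ((u + v n) * f - (u + j) * f) * h0

/-! ### Lower bounds on the value functions -/

/-- The bounds on a stage-`k` value function carried through the backward induction.  The
lower one is the belief average of the costs of a decision maker who knows the number of arrivals. -/
def ValueBounds (T Rbar η : ℝ) (fR : ℝ → ℝ) (K k : ℕ) (J : (ℕ → ℝ) → ℝ → ℝ → ℝ) : Prop :=
  ∀ p, memP K k p → ∀ w ≤ T, ∀ b ∈ Icc 0 Rbar, J p w b ≤ 0 ∧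
    ∑ n ∈ Finset.Icc k K, p n * (-η * max b (phi T Rbar η fR (n - k) w b)) ≤ J p w b

lemma ValueBounds.abs_le (hη : 0 < η)
    (hφ : ∀ ℓ, ∀ w ≤ T, ∀ b ∈ Icc 0 Rbar, phi T Rbar η fR ℓ w b ≤ Rbar)
    {K k : ℕ} {J : (ℕ → ℝ) → ℝ → ℝ → ℝ} (hJ : ValueBounds T Rbar η fR K k J)
    {p : ℕ → ℝ} (hp : memP K k p) {w b : ℝ} (hw : w ≤ T) (hb : b ∈ Icc 0 Rbar) :
    |J p w b| ≤ η * Rbar := by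
  obtain ⟨h1, h2⟩ := hJ p hp w hw b hb
  have h3 : ∑ n ∈ Finset.Icc k K, p n * (-η * Rbar)
      ≤ ∑ n ∈ Finset.Icc k K, p n * (-η * max b (phi T Rbar η fR (n - k) w b)) := by
    refine Finset.sum_le_sum fun n _ => mul_le_mul_of_nonneg_left ?_ (hp.1 n)
    have := max_le hb.2 (hφ (n - k) w hw b hb)
    nlinarith
  rw [← Finset.sum_mul, hp.2.2, one_mul] at h3
  rw [_root_.abs_le]
  constructor
  · linarith
  · have : 0 ≤ Rbar := hb.1.trans hb.2
    nlinarith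

lemma contCost_lower (hη : 0 < η) (hRbar : 0 < Rbar) (hf0 : ∀ r, 0 ≤ fR r) (hf : Measurable fR)
    (hfi : IntegrableOn fR (Ioc 0 Rbar))
    (hφ : ∀ ℓ, ∀ w ≤ T, ∀ b ∈ Icc 0 Rbar, phi T Rbar η fR ℓ w b ≤ Rbar)
    {K k : ℕ} {J : (ℕ → ℝ) → ℝ → ℝ → ℝ}
    (hJm : Measurable (fun x : (ℕ → ℝ) × ℝ × ℝ => J x.1 x.2.1 x.2.2))
    (hJ : ValueBounds T Rbar η fR K (k + 1) J)
    {p : ℕ → ℝ} (hp : memP K k p) {w b : ℝ} (hw : w ≤ T) (hb : b ∈ Icc 0 Rbar) :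
    p k * (T - w - η * b) + ∑ n ∈ Finset.Icc (k + 1) K, p n * (-η * phi T Rbar η fR (n - k) w b)
      ≤ contCost T Rbar η fR K J k p w b := by
  have hs : 0 ≤ T - w := by linarith
  have hI : ∀ n ∈ Finset.Icc (k + 1) K, Integrable (fun z : ℝ × ℝ => p n *
      ((z.2 + J (τbel T K k p w z.2) (w + z.2) (max b z.1)) * gmin (n - k) (T - w) z.2 * fR z.1))
      (boxMeasure Rbar (T - w)) := by
    intro n hn
    have hτ : Measurable (fun z : ℝ × ℝ => τbel T K k p w z.2) :=
      (measurable_τbel T K k).comp (f := fun z : ℝ × ℝ => (p, w, z.2)) (by fun_prop)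
    have hm : Measurable (fun z : ℝ × ℝ => J (τbel T K k p w z.2) (w + z.2) (max b z.1)) :=
      hJm.comp (f := fun z : ℝ × ℝ => (τbel T K k p w z.2, w + z.2, max b z.1))
        (hτ.prodMk (by fun_prop))
    refine integrable_weighted hf hfi (n - k) (p n) ((T - w) + η * Rbar)
      (F := fun r u => u + J (τbel T K k p w u) (w + u) (max b r)) (by fun_prop) ?_
    intro r hr u hu h0
    have h1 := hJ.abs_le hη hφ (memP_τbel hp (denom_pos hp hn h0))
      (w := w + u) (b := max b r) (by linarith [hu.2])
      ⟨le_max_of_le_left hb.1, max_le hb.2 hr.2⟩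
    calc |u + J (τbel T K k p w u) (w + u) (max b r)|
        ≤ |u| + |J (τbel T K k p w u) (w + u) (max b r)| := abs_add_le _ _
      _ ≤ (T - w) + η * Rbar := by
          rw [abs_of_pos hu.1]; exact add_le_add hu.2 h1
  have hEq : ∀ n ∈ Finset.Icc (k + 1) K, p n *
      (∫ r in (0:ℝ)..Rbar, ∫ u in (0:ℝ)..(T - w),
        (u + J (τbel T K k p w u) (w + u) (max b r)) * gmin (n - k) (T - w) u * fR r)
      = ∫ z, p n * ((z.2 + J (τbel T K k p w z.2) (w + z.2) (max b z.1))
          * gmin (n - k) (T - w) z.2 * fR z.1) ∂(boxMeasure Rbar (T - w)) := by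
    intro n hn
    have := interval_eq_box hRbar.le hs (F := fun r u => p n *
      ((u + J (τbel T K k p w u) (w + u) (max b r)) * gmin (n - k) (T - w) u * fR r)) (hI n hn)
    rw [← this]
    simp only [intervalIntegral.integral_const_mul]
  -- the threshold recursion, rewritten as an integral of costs `u - η max(…)`
  have hφI : ∀ n ∈ Finset.Icc (k + 1) K, Integrable (fun z : ℝ × ℝ => p n *
        ((z.2 + -η * max (max b z.1) (phi T Rbar η fR (n - (k + 1)) (w + z.2) (max b z.1)))
          * gmin (n - k) (T - w) z.2 * fR z.1)) (boxMeasure Rbar (T - w)) ∧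
      p n * (-η * phi T Rbar η fR (n - k) w b) = ∫ z, p n *
        ((z.2 + -η * max (max b z.1) (phi T Rbar η fR (n - (k + 1)) (w + z.2) (max b z.1)))
          * gmin (n - k) (T - w) z.2 * fR z.1) ∂(boxMeasure Rbar (T - w)) := by
    intro n hn
    obtain ⟨ℓ, rfl⟩ : ∃ ℓ, n = k + 1 + ℓ := ⟨n - (k + 1), by
      have := (Finset.mem_Icc.1 hn).1; omega⟩
    have e1 : k + 1 + ℓ - (k + 1) = ℓ := by omega
    have e2 : k + 1 + ℓ - k = ℓ + 1 := by omega
    rw [e1, e2]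
    have hi := integrable_phi (w := w) hη hf hfi ℓ hb (hφ ℓ)
    have hfun : (fun z : ℝ × ℝ => p (k + 1 + ℓ) *
        ((z.2 + -η * max (max b z.1) (phi T Rbar η fR ℓ (w + z.2) (max b z.1)))
          * gmin (ℓ + 1) (T - w) z.2 * fR z.1)) = fun z => p (k + 1 + ℓ) * (-η *
        ((max b (max z.1 (phi T Rbar η fR ℓ (w + z.2) (max b z.1))) - z.2 / η)
          * gmin (ℓ + 1) (T - w) z.2 * fR z.1)) := by
      funext z
      rw [← max_assoc]
      field_simp
      ring
    rw [hfun]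
    refine ⟨(hi.const_mul _).const_mul _, ?_⟩
    rw [integral_const_mul, integral_const_mul]
    simp only [phi]
    rw [interval_eq_box hRbar.le hs (F := fun r u =>
      (max b (max r (phi T Rbar η fR ℓ (w + u) (max b r))) - u / η)
          * gmin (ℓ + 1) (T - w) u * fR r) hi]
  unfold contCost
  rw [Finset.sum_congr rfl hEq, Finset.sum_congr rfl fun n hn => (hφI n hn).2,
    ← integral_finsetSum _ hI, ← integral_finsetSum _ fun n hn => (hφI n hn).1]
  refine add_le_add le_rfl ?_
  refine integral_mono_ae (integrable_finsetSum _ fun n hn => (hφI n hn).1)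
    (integrable_finsetSum _ hI) (ae_boxMeasure fun r hr u hu => ?_)
  exact bayes_pointwise hp (hf0 r)
    (fun n => -η * max (max b r) (phi T Rbar η fR (n - (k + 1)) (w + u) (max b r)))
    (fun hD => (hJ _ (memP_τbel hp hD) (w + u) (by linarith [hu.2]) (max b r)
      ⟨le_max_of_le_left hb.1, max_le hb.2 hr.2⟩).2)

lemma value_bounds (hη : 0 < η) (hRbar : 0 < Rbar) (hf0 : ∀ r, 0 ≤ fR r) (hf : Measurable fR)
    (hfi : IntegrableOn fR (Ioc 0 Rbar))
    (hφ : ∀ ℓ, ∀ w ≤ T, ∀ b ∈ Icc 0 Rbar, phi T Rbar η fR ℓ w b ≤ Rbar)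
    (K m : ℕ) (hm : m ≤ K) : ValueBounds T Rbar η fR K (K - m) (Jaux T Rbar η fR K m) := by
  induction m with
  | zero =>
    intro p hp w hw b hb
    have h := hp.2.2
    simp only [Nat.sub_zero, Finset.Icc_self, Finset.sum_singleton] at h ⊢
    simp only [Jaux, h, Nat.sub_self, phi, max_eq_left hb.1, one_mul, le_refl, and_true]
    nlinarith [hb.1]
  | succ m ih =>
    intro p hp w hw b hb
    have hk : K - (m + 1) + 1 = K - m := by omega
    have ih' := ih (by omega)
    rw [← hk] at ih'
    have hc := contCost_lower hη hRbar hf0 hf hfi hφ (measurable_Jaux T Rbar η fR hf K m) ih'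
      hp hw hb
    simp only [Jaux]
    refine ⟨min_le_of_left_le (by nlinarith [hb.1]), le_min ?_ (le_trans ?_ hc)⟩
    · calc _ ≤ ∑ n ∈ Finset.Icc (K - (m + 1)) K, p n * (-η * b) := by
            refine Finset.sum_le_sum fun n _ => mul_le_mul_of_nonneg_left ?_ (hp.1 n)
            have := le_max_left b (phi T Rbar η fR (n - (K - (m + 1))) w b)
            nlinarith
        _ = -η * b := by rw [← Finset.sum_mul, hp.2.2, one_mul]
    · rw [← Finset.add_sum_Ioc_eq_sum_Icc (by omega : K - (m + 1) ≤ K)]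
      have hIoc : Finset.Ioc (K - (m + 1)) K = Finset.Icc (K - (m + 1) + 1) K := by
        ext n; simp
      rw [hIoc]
      refine add_le_add (mul_le_mul_of_nonneg_left ?_ (hp.1 _))
        (Finset.sum_le_sum fun n _ => mul_le_mul_of_nonneg_left ?_ (hp.1 n))
      · have := le_max_left b (phi T Rbar η fR (K - (m + 1) - (K - (m + 1))) w b)
        nlinarith
      · have := le_max_right b (phi T Rbar η fR (n - (K - (m + 1))) w b)
        nlinarith

end Bounds

/-- Inner bound on the optimum stopping set: the intersection of the simplex `P_k`
with the convex hull of the corner point `p_k^{(k)}` and the threshold points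
`a_k^1, …, a_k^{K−k}` is contained in `C_k(w,b)`. -/
theorem inner_bound (T Rbar η : ℝ) (hT : 0 < T) (hRbar : 0 < Rbar) (hη : 0 < η)
    (fR : ℝ → ℝ) (hfR_nonneg : ∀ r, 0 ≤ fR r)
    (hfR_supp : ∀ r, r < 0 ∨ Rbar < r → fR r = 0)
    (hfR_meas : Measurable fR)
    (hfR_int : ∫ r in (0:ℝ)..Rbar, fR r = 1)
    (K : ℕ) (hK : 2 ≤ K)
    (k : ℕ) (hk1 : 1 ≤ k) (hk2 : k ≤ K - 1)
    (w b : ℝ) (hw : w ∈ Set.Ioo 0 T) (hb : b ∈ Set.Icc 0 Rbar)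
    (hpos : ∀ ℓ, 1 ≤ ℓ → ℓ ≤ K - k → 0 < T - w - η * (b - phi T Rbar η fR ℓ w b))
    (δ : ℕ → ℝ)
    (hδ : ∀ ℓ, 1 ≤ ℓ → ℓ ≤ K - k →
      δ ℓ = (T - w) / (T - w - η * (b - phi T Rbar η fR ℓ w b)))
    (a : ℕ → ℕ → ℝ)
    (ha : ∀ ℓ n, a ℓ n = if n = k then 1 - δ ℓ else if n = k + ℓ then δ ℓ else 0)
    (pkk : ℕ → ℝ) (hpkk : ∀ n, pkk n = if n = k then 1 else 0) :
    {p : ℕ → ℝ | memP K k p} ∩ convexHull ℝ (insert pkk (a '' Set.Icc 1 (K - k)))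
      ⊆ {p : ℕ → ℝ | memP K k p ∧ -η * b ≤ cCost T Rbar η fR K k p w b} := by
  rintro p ⟨hp, hconv⟩
  refine ⟨hp, ?_⟩
  have hp' : memP K k p := hp
  have hfi : IntegrableOn fR (Ioc 0 Rbar) := by
    have : IntervalIntegrable fR volume 0 Rbar := by
      by_contra h
      rw [intervalIntegral.integral_undef h] at hfR_int
      exact zero_ne_one hfR_int
    exact (intervalIntegrable_iff_integrableOn_Ioc_of_le hRbar.le).1 this
  have hφ := phi_le (T := T) hη hRbar hfR_nonneg hfR_meas hfi hfR_int
  have hk : K - (K - (k + 1)) = k + 1 := by omega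
  have hJ := value_bounds hη hRbar hfR_nonneg hfR_meas hfi hφ K (K - (k + 1)) (by omega)
  rw [hk] at hJ
  have hc := contCost_lower hη hRbar hfR_nonneg hfR_meas hfi hφ
    (measurable_Jaux T Rbar η fR hfR_meas K (K - (k + 1))) hJ hp' hw.2.le hb
  -- the affine lower bound on `c_k + η b`, homogenised to a linear functional of the belief
  let L : (ℕ → ℝ) → ℝ := fun q => q k * (T - w) +
    ∑ n ∈ Finset.Icc (k + 1) K, q n * (η * (b - phi T Rbar η fR (n - k) w b))
  have hL : IsLinearMap ℝ L := by
    constructor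
    · intro x y
      simp only [L, Pi.add_apply, add_mul, Finset.sum_add_distrib]
      ring
    · intro c x
      simp only [L, Pi.smul_apply, smul_eq_mul, mul_add, Finset.mul_sum, mul_assoc]
  have hsub : convexHull ℝ (insert pkk (a '' Set.Icc 1 (K - k))) ⊆ {q | 0 ≤ L q} := by
    refine convexHull_min ?_ (convex_halfSpace_ge hL 0)
    rintro q (rfl | ⟨ℓ, ⟨hℓ1, hℓ2⟩, rfl⟩)
    · have : ∑ n ∈ Finset.Icc (k + 1) K, q n * (η * (b - phi T Rbar η fR (n - k) w b)) = 0 := by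
        refine Finset.sum_eq_zero fun n hn => ?_
        have hne : n ≠ k := by have := (Finset.mem_Icc.1 hn).1; omega
        simp [hpkk, hne]
      have hqk : q k = 1 := by simp [hpkk]
      change 0 ≤ q k * (T - w) + _
      rw [this, hqk]
      linarith [hw.2]
    · have hsum : ∑ n ∈ Finset.Icc (k + 1) K, a ℓ n * (η * (b - phi T Rbar η fR (n - k) w b))
          = δ ℓ * (η * (b - phi T Rbar η fR ℓ w b)) := by
        rw [Finset.sum_eq_single (k + ℓ)]
        · simp [ha]
          omega
        · intro n hn hne
          have hne' : n ≠ k := by have := (Finset.mem_Icc.1 hn).1; omega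
          simp [ha, hne, hne']
        · intro h
          exact absurd (Finset.mem_Icc.2 ⟨by omega, by omega⟩) h
      have hd : δ ℓ * (T - w - η * (b - phi T Rbar η fR ℓ w b)) = T - w := by
        rw [hδ ℓ hℓ1 hℓ2, div_mul_cancel₀ _ (hpos ℓ hℓ1 hℓ2).ne']
      have hk' : a ℓ k = 1 - δ ℓ := by simp [ha]
      change 0 ≤ a ℓ k * (T - w) + _
      rw [hsum, hk']
      nlinarith [hd]
  have hLp : 0 ≤ L p := hsub hconv
  have hsum1 : p k + ∑ n ∈ Finset.Icc (k + 1) K, p n = 1 := by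
    rw [← hp'.2.2, ← Finset.add_sum_Ioc_eq_sum_Icc (by omega : k ≤ K)]
    congr 2
    ext n; simp
  have hLeq : L p = p k * (T - w - η * b)
      + ∑ n ∈ Finset.Icc (k + 1) K, p n * (-η * phi T Rbar η fR (n - k) w b) + η * b := by
    have : ∑ n ∈ Finset.Icc (k + 1) K, p n * (η * (b - phi T Rbar η fR (n - k) w b))
        = (∑ n ∈ Finset.Icc (k + 1) K, p n) * (η * b)
          + ∑ n ∈ Finset.Icc (k + 1) K, p n * (-η * phi T Rbar η fR (n - k) w b) := by
      rw [Finset.sum_mul, ← Finset.sum_add_distrib]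
      exact Finset.sum_congr rfl fun n _ => by ring
    simp only [L, this]
    linear_combination (η * b) * hsum1
  unfold cCost
  linarith
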